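/- Let X be an implicative-orthomodular algebra. For all x, y, z ∈ X, (z ⊓ x)→(y ⊓ x) = (z ⊓ x)→y. -/

import Mathlib

/-!
In an involutive BE algebra contraposition `x* → y* = y → x` holds, so that
`(x ⊓ y)* = (y → x) → y*`. Under (IOM) triple implication collapses,
`((b → p) → p) → p = b → p` (`InvBE.imp_imp_imp_of_iom`). Contraposing `(z ⊓ x) → (y ⊓ x)` and
exchanging antecedents puts it in the form
`(x → z) → (((y* → x*) → x*) → x*)`; collapsing the inner term and exchanging back gives
`y* → (z ⊓ x)*`, which is `(z ⊓ x) → y`.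
-/

/-- An involutive BE algebra `(X, →, 0, 1)`. -/
structure InvBE (X : Type*) where
  imp : X → X → X
  one : X
  zero : X
  imp_self : ∀ x, imp x x = one
  imp_one : ∀ x, imp x one = one
  one_imp : ∀ x, imp one x = x
  exchange : ∀ x y z, imp x (imp y z) = imp y (imp x z)
  zero_imp : ∀ x, imp zero x = one
  imp_involutive : ∀ x, imp (imp x zero) zero = x

namespace InvBE

variable {X : Type*} (A : InvBE X)

/-- `x* := x → 0`. -/
def neg (x : X) : X := A.imp x A.zero

/-- `x ⊓ y := ((x* → y*) → y*)*`. -/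
def inf (x y : X) : X := A.neg (A.imp (A.imp (A.neg x) (A.neg y)) (A.neg y))

/-- `x ∪ y := (x → y) → y`. -/
def sup (x y : X) : X := A.imp (A.imp x y) y

/-- `x ⊙ y := (x → y*)*`. -/
def odot (x y : X) : X := A.neg (A.imp x (A.neg y))

/-- `x ⊕ y := (x* ⊙ y*)*`. -/
def oplus (x y : X) : X := A.neg (A.odot (A.neg x) (A.neg y))

/-- `x ≤_Q y` iff `x = x ⊓ y`. -/
def leQ (x y : X) : Prop := x = A.inf x y

/-- `x ≤ y` iff `x → y = 1`. -/
def le (x y : X) : Prop := A.imp x y = A.one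

/-- (IOM): `x ⊓ (y → x) = x` for all `x, y`. -/
def IOM : Prop := ∀ x y, A.inf x (A.imp y x) = x

/-- (QW): `x → ((x ⊓ y) ⊓ (z ⊓ x)) = (x → y) ⊓ (x → z)` for all `x, y, z`. -/
def QW : Prop :=
  ∀ x y z, A.imp x (A.inf (A.inf x y) (A.inf z x)) = A.inf (A.imp x y) (A.imp x z)

/-- A filter: nonempty, closed under `⊙`, upward closed for `≤_Q`. -/
def IsFilter (F : Set X) : Prop :=
  F.Nonempty ∧ (∀ x ∈ F, ∀ y ∈ F, A.odot x y ∈ F) ∧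
    (∀ x ∈ F, ∀ y : X, A.leQ x y → y ∈ F)

/-- A deductive system: contains `1` and is closed under modus ponens. -/
def IsDS (F : Set X) : Prop :=
  A.one ∈ F ∧ ∀ x y : X, x ∈ F → A.imp x y ∈ F → y ∈ F

/-- `pow x n` is the `⊙`-product of `n + 1` copies of `x`, i.e. `x^(n+1)`. -/
def pow (x : X) : ℕ → X
  | 0 => x
  | n + 1 => A.odot x (pow x n)

/-- A maximal filter: proper and not contained in any other proper filter. -/
def IsMaximalFilter (F : Set X) : Prop :=
  A.IsFilter F ∧ F ≠ Set.univ ∧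
    ∀ G : Set X, A.IsFilter G → F ⊆ G → G ≠ Set.univ → G = F

/-- A strongly maximal filter: for every `x ∉ F` there is `n ≥ 1` with `(xⁿ)* ∈ F`. -/
def IsStronglyMaximalFilter (F : Set X) : Prop :=
  A.IsFilter F ∧ ∀ x : X, x ∉ F → ∃ n : ℕ, A.neg (A.pow x n) ∈ F

/-- `x ≡_F y` iff there is `f` with `x, y ≤_Q f` and `f → x, f → y ∈ F`. -/
def cong (F : Set X) (x y : X) : Prop :=
  ∃ f : X, A.leQ x f ∧ A.leQ y f ∧ A.imp f x ∈ F ∧ A.imp f y ∈ F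

end InvBE

namespace InvBE

variable {X : Type*} (A : InvBE X)

theorem neg_neg (x : X) : A.neg (A.neg x) = x := A.imp_involutive x

theorem imp_neg_comm (x y : X) : A.imp x (A.neg y) = A.imp y (A.neg x) :=
  A.exchange x y A.zero

theorem neg_imp_neg (x y : X) : A.imp (A.neg x) (A.neg y) = A.imp y x := by
  rw [imp_neg_comm, neg_neg]

theorem neg_inf (x y : X) : A.neg (A.inf x y) = A.imp (A.imp y x) (A.neg y) := by
  rw [inf, neg_neg, neg_imp_neg]

variable {A}

/-- (IOM) in negated form. -/
theorem IOM.neg_eq (hA : A.IOM) (x y : X) :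
    A.imp (A.imp (A.imp y x) x) (A.neg (A.imp y x)) = A.neg x := by
  rw [← neg_inf, hA]

/-- With `c = b → p`, one use of (IOM) writes `p*` as `(c → p) → c*`; a second use, applied to `c*`
and this implication, then recovers `c` as `(c → p) → p`. -/
theorem imp_imp_imp_of_iom (hA : A.IOM) (b p : X) :
    A.imp (A.imp (A.imp b p) p) p = A.imp b p := by
  have h := hA.neg_eq (A.neg (A.imp b p)) (A.imp (A.imp b p) p)
  rwa [hA.neg_eq p b, neg_imp_neg, neg_neg, neg_neg] at h

end InvBE

/-- In an IOM algebra, `(z ⊓ x) → (y ⊓ x) = (z ⊓ x) → y`. -/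
theorem stmt_12 {X : Type*} (A : InvBE X) (hA : A.IOM) :
    ∀ x y z : X, A.imp (A.inf z x) (A.inf y x) = A.imp (A.inf z x) y := by
  intro x y z
  rw [← A.neg_imp_neg (A.inf y x), ← A.neg_imp_neg y, A.neg_inf, A.neg_inf,
    A.exchange _ (A.imp x z), ← A.neg_imp_neg y x, InvBE.imp_imp_imp_of_iom hA, A.exchange]
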